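/- (Linearized equations (2.5)/(2.8).) Each of the m+n+1 functions V_i = U·ω_i (i = 1,…,m+n+1), i.e. V_j(x,t) = U(x,t)^{(Q+2)/(Q-2)}[(1 + |x|²/4)x_j + ∑_{r=1}^n ∑_{i=1}^m t_r x_i U^(r)_{j,i}] for j = 1,…,m, V_{m+r}(x,t) = 2 U(x,t)^{(Q+2)/(Q-2)} t_r for r = 1,…,n, and V_{m+n+1}(x,t) = U(x,t)^{(Q+2)/(Q-2)}(1 − |x|⁴/16 − |t|²), satisfies the equation Δ_G V_i + (m(Q+2)/4) · U^{4/(Q-2)} · V_i = 0 at every point of ℝ^m × ℝ^n. -/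

import Mathlib

/-!
Write `s = 1 + |x|²/4`, `D = s² + |t|²` and `a = -(Q+2)/4`. As `U = D^(-(Q-2)/4)`, one has
`U^(4/(Q-2)) = D⁻¹`, and every `V_i` has the form `D^a P` with `P` a polynomial.

The H-type condition says `A_k A_r + A_r A_k = -2 δ_{kr}`, so the vectors `A_kᵀ x` are
orthogonal to `x` and to each other and have length `|x|`. This gives `|∇D|² = |x|² D`
(`IsHType.sum_G_G`) and `Δ_G D = m s + (n+1)/2 |x|²` (`IsHType.sum_hess_D`). By the Leibniz rule
the equation for `D^a P` then collapses to `D Δ_G P + 2a ⟨∇D, ∇P⟩ = a |x|² P`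
(`IsHType.reduction`), which is checked for each of the three kinds of polynomials:

* `P = 2 t_r`: `Δ_G P = 0` and `2 ⟨∇D, ∇P⟩ = |x|² P`;
* `P = s x_j + ∑_r t_r (A_r x)_j`: `Δ_G P = (Q+2)/2 x_j` and
  `⟨∇D, ∇P⟩ = |x|²/2 P + D x_j` (`IsHType.lap_P1`, `IsHType.grad_P1`);
* `P = 1 - |x|⁴/16 - |t|² = 2 s - D`: it follows from the formulas for `D` and `s`.

Derivatives along `X_j` are computed with the predicate `HasX`, which carries global
differentiability along, so that the rules can be iterated for second derivatives.
-/

open MeasureTheory Real Filter Matrix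

noncomputable section

abbrev Pt (m n : ℕ) := (Fin m → ℝ) × (Fin n → ℝ)

def IsHType (m n : ℕ) (A : Fin n → Matrix (Fin m) (Fin m) ℝ) : Prop :=
  (∀ k, (A k)ᵀ = -(A k)) ∧ (∀ k, A k * (A k)ᵀ = 1) ∧
    ∀ i j, i ≠ j → A i * A j + A j * A i = 0

def Qh (m n : ℕ) : ℝ := m + 2 * n

def Xvf (m n : ℕ) (A : Fin n → Matrix (Fin m) (Fin m) ℝ) (j : Fin m)
    (u : Pt m n → ℝ) (p : Pt m n) : ℝ :=
  fderiv ℝ u p (Pi.single j 1, 0)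
    + (1/2) * ∑ k : Fin n, (∑ i : Fin m, A k i j * p.1 i) * fderiv ℝ u p (0, Pi.single k 1)

def gradSq (m n : ℕ) (A : Fin n → Matrix (Fin m) (Fin m) ℝ)
    (u : Pt m n → ℝ) (p : Pt m n) : ℝ :=
  ∑ j : Fin m, (Xvf m n A j u p) ^ 2

def subLap (m n : ℕ) (A : Fin n → Matrix (Fin m) (Fin m) ℝ)
    (u : Pt m n → ℝ) (p : Pt m n) : ℝ :=
  ∑ j : Fin m, Xvf m n A j (Xvf m n A j u) p

def Uf (m n : ℕ) (p : Pt m n) : ℝ :=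
  ((1 + (∑ i, p.1 i ^ 2) / 4) ^ 2 + ∑ r, p.2 r ^ 2) ^ (-(Qh m n - 2) / 4)

def Sconst (m n : ℕ) : ℝ :=
  (4 : ℝ) ^ (-(2 * (n : ℝ)) / Qh m n) * ((m : ℝ) * (Qh m n - 2)) *
    π ^ (((m : ℝ) + n) / Qh m n) *
    (Real.Gamma (((m : ℝ) + n) / 2) / Real.Gamma ((m : ℝ) + n)) ^ ((2 : ℝ) / Qh m n)


/-- `ω_j`, `j = 1,…,m`. -/
def om1 (m n : ℕ) (A : Fin n → Matrix (Fin m) (Fin m) ℝ) (j : Fin m) (p : Pt m n) : ℝ :=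
  Uf m n p ^ (4 / (Qh m n - 2)) *
    ((1 + (∑ i, p.1 i ^ 2) / 4) * p.1 j
      + ∑ r : Fin n, ∑ i : Fin m, p.2 r * p.1 i * A r j i)

/-- `ω_{m+r}`, `r = 1,…,n`. -/
def om2 (m n : ℕ) (r : Fin n) (p : Pt m n) : ℝ :=
  2 * Uf m n p ^ (4 / (Qh m n - 2)) * p.2 r

/-- `ω_{m+n+1}`. -/
def om3 (m n : ℕ) (p : Pt m n) : ℝ :=
  Uf m n p ^ (4 / (Qh m n - 2)) * (1 - (∑ i, p.1 i ^ 2) ^ 2 / 16 - ∑ r, p.2 r ^ 2)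

/-! ### Calculus along the fields `X_j` -/

section Helpers

/-- `u` is differentiable on all of `ℝ^m × ℝ^n` and `X_j u = u'` everywhere. -/
def HasX {m n : ℕ} (A : Fin n → Matrix (Fin m) (Fin m) ℝ) (j : Fin m)
    (u u' : Pt m n → ℝ) : Prop :=
  Differentiable ℝ u ∧ ∀ p, Xvf m n A j u p = u' p

/-- The value at `p` of the vector field `X_j`, so that `X_j u p` is a single Fréchet derivative. -/
def dirX {m n : ℕ} (A : Fin n → Matrix (Fin m) (Fin m) ℝ) (j : Fin m) (p : Pt m n) : Pt m n :=
  (Pi.single j 1, fun k => (1/2) * ∑ i : Fin m, A k i j * p.1 i)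

/-- The coefficient `(A_kᵀ x)_j` of `(1/2) ∂/∂t_k` in `X_j`. -/
def wv {m n : ℕ} (A : Fin n → Matrix (Fin m) (Fin m) ℝ) (k : Fin n) (j : Fin m)
    (p : Pt m n) : ℝ := ∑ i : Fin m, A k i j * p.1 i

/-- `|x|²`. -/
def xsq {m n : ℕ} (p : Pt m n) : ℝ := ∑ i, p.1 i ^ 2

/-- `1 + |x|²/4`. -/
def sf {m n : ℕ} (p : Pt m n) : ℝ := 1 + xsq p / 4

/-- `D = (1 + |x|²/4)² + |t|²`, so that `Uf` is `D ^ (-(Q-2)/4)`. -/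
def Df {m n : ℕ} (p : Pt m n) : ℝ := sf p ^ 2 + ∑ r, p.2 r ^ 2

/-- The `j`-th component of the horizontal gradient of `D`. -/
def Gf {m n : ℕ} (A : Fin n → Matrix (Fin m) (Fin m) ℝ) (j : Fin m) (p : Pt m n) : ℝ :=
  sf p * p.1 j + ∑ k, p.2 k * wv A k j p

variable {m n : ℕ} {A : Fin n → Matrix (Fin m) (Fin m) ℝ}

lemma Xvf_eq (j : Fin m) (u : Pt m n → ℝ) (p : Pt m n) :
    Xvf m n A j u p = fderiv ℝ u p (dirX A j p) := by
  have h : dirX A j p = (Pi.single j 1, 0) + ∑ k : Fin n, ((1/2) * ∑ i : Fin m, A k i j * p.1 i) •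
      ((0 : Fin m → ℝ), (Pi.single k 1 : Fin n → ℝ)) := by
    ext i
    · simp [dirX, Prod.fst_sum]
    · simp [dirX, Prod.snd_sum, Finset.sum_apply, Pi.single_apply]
  rw [h, map_add, map_sum]
  simp only [map_smul, smul_eq_mul, Xvf, Finset.mul_sum, Finset.sum_mul, mul_assoc]

namespace HasX

variable {j : Fin m} {u v u' v' : Pt m n → ℝ}

lemma of_eq (h : HasX A j u u') (e : ∀ p, u' p = v' p) : HasX A j u v' :=
  ⟨h.1, fun p => (h.2 p).trans (e p)⟩

lemma const (c : ℝ) : HasX A j (fun _ : Pt m n => c) (fun _ => 0) :=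
  ⟨by fun_prop, fun p => by simp [Xvf_eq]⟩

lemma add (hu : HasX A j u u') (hv : HasX A j v v') :
    HasX A j (fun p => u p + v p) (fun p => u' p + v' p) :=
  ⟨hu.1.add hv.1, fun p => by
    beta_reduce
    rw [← hu.2, ← hv.2, Xvf_eq, Xvf_eq, Xvf_eq, fderiv_fun_add (hu.1 p) (hv.1 p)]; rfl⟩

lemma mul (hu : HasX A j u u') (hv : HasX A j v v') :
    HasX A j (fun p => u p * v p) (fun p => u p * v' p + v p * u' p) :=
  ⟨hu.1.mul hv.1, fun p => by
    beta_reduce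
    rw [← hu.2, ← hv.2, Xvf_eq, Xvf_eq, Xvf_eq, fderiv_fun_mul (hu.1 p) (hv.1 p)]; rfl⟩

lemma const_mul (c : ℝ) (hu : HasX A j u u') : HasX A j (fun p => c * u p) (fun p => c * u' p) :=
  ((const c).mul hu).of_eq fun p => by ring

lemma sub (hu : HasX A j u u') (hv : HasX A j v v') :
    HasX A j (fun p => u p - v p) (fun p => u' p - v' p) := by
  have := hu.add (hv.const_mul (-1))
  simpa [sub_eq_add_neg] using this

lemma sum {ι : Type*} (s : Finset ι) {f f' : ι → Pt m n → ℝ} (h : ∀ i, HasX A j (f i) (f' i)) :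
    HasX A j (fun p => ∑ i ∈ s, f i p) (fun p => ∑ i ∈ s, f' i p) := by
  classical
  induction s using Finset.induction_on with
  | empty => simpa using const (A := A) (j := j) 0
  | insert a s ha ih => simpa [Finset.sum_insert ha] using (h a).add ih

lemma rpow (hu : HasX A j u u') (hpos : ∀ p, 0 < u p) (a : ℝ) :
    HasX A j (fun p => u p ^ a) (fun p => a * u p ^ (a - 1) * u' p) :=
  ⟨fun p => (hu.1 p).rpow_const (Or.inl (hpos p).ne'), fun p => by
    have h := ((hu.1 p).hasFDerivAt.rpow_const (p := a) (Or.inl (hpos p).ne')).fderiv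
    beta_reduce
    rw [← hu.2, Xvf_eq, Xvf_eq, h]; rfl⟩

end HasX

lemma hasX_x (j i : Fin m) :
    HasX A j (fun p : Pt m n => p.1 i) (fun _ => if i = j then 1 else 0) := by
  refine ⟨by fun_prop, fun p => ?_⟩
  have h : HasFDerivAt (fun p : Pt m n => p.1 i)
      ((ContinuousLinearMap.proj (R := ℝ) (φ := fun _ : Fin m => ℝ) i).comp
        (ContinuousLinearMap.fst ℝ (Fin m → ℝ) (Fin n → ℝ))) p :=
    ((ContinuousLinearMap.proj (R := ℝ) (φ := fun _ : Fin m => ℝ) i).comp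
      (ContinuousLinearMap.fst ℝ (Fin m → ℝ) (Fin n → ℝ))).hasFDerivAt
  rw [Xvf_eq, h.fderiv]
  simp [dirX, Pi.single_apply]

lemma hasX_t (j : Fin m) (k : Fin n) :
    HasX A j (fun p : Pt m n => p.2 k) (fun p => (1/2) * wv A k j p) := by
  refine ⟨by fun_prop, fun p => ?_⟩
  have h : HasFDerivAt (fun p : Pt m n => p.2 k)
      ((ContinuousLinearMap.proj (R := ℝ) (φ := fun _ : Fin n => ℝ) k).comp
        (ContinuousLinearMap.snd ℝ (Fin m → ℝ) (Fin n → ℝ))) p :=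
    ((ContinuousLinearMap.proj (R := ℝ) (φ := fun _ : Fin n => ℝ) k).comp
      (ContinuousLinearMap.snd ℝ (Fin m → ℝ) (Fin n → ℝ))).hasFDerivAt
  rw [Xvf_eq, h.fderiv]
  simp [dirX, wv]

lemma hasX_w (j l : Fin m) (k : Fin n) : HasX A j (wv A k l) (fun _ => A k j l) :=
  (HasX.sum Finset.univ fun i => (hasX_x j i).const_mul (A k i l)).of_eq fun p => by simp

lemma hasX_s (j : Fin m) : HasX A j (sf : Pt m n → ℝ) (fun p => p.1 j / 2) := by
  have h := (HasX.const (A := A) (j := j) 1).add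
    ((HasX.sum Finset.univ fun i => (hasX_x (A := A) j i).mul (hasX_x j i)).const_mul (1/4))
  have e : (sf : Pt m n → ℝ) = fun p => 1 + 1/4 * ∑ i, p.1 i * p.1 i := by
    funext p; simp only [sf, xsq, sq]; ring
  rw [e]
  refine h.of_eq fun p => ?_
  simp [Finset.sum_add_distrib]; ring

lemma hasX_D (j : Fin m) : HasX A j (Df : Pt m n → ℝ) (Gf A j) := by
  have h := ((hasX_s (A := A) j).mul (hasX_s j)).add
    (HasX.sum Finset.univ fun k => (hasX_t (A := A) j k).mul (hasX_t j k))
  have e : (Df : Pt m n → ℝ) = fun p => sf p * sf p + ∑ i, p.2 i * p.2 i := by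
    funext p; simp only [Df, sq]
  rw [e]
  refine h.of_eq fun p => ?_
  have : ∀ k, p.2 k * (1 / 2 * wv A k j p) + p.2 k * (1 / 2 * wv A k j p) = p.2 k * wv A k j p :=
    fun k => by ring
  simp only [this, Gf]; ring

lemma Df_pos (p : Pt m n) : 0 < Df p := by
  have h1 : 0 ≤ xsq p := Finset.sum_nonneg fun i _ => sq_nonneg _
  have h2 : 0 ≤ ∑ r, p.2 r ^ 2 := Finset.sum_nonneg fun i _ => sq_nonneg _
  have h3 : 0 < sf p := by unfold sf; linarith
  unfold Df; positivity

/-! ### Consequences of the H-type condition -/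

section Algebra

lemma IsHType.skew (hA : IsHType m n A) (k : Fin n) (i j : Fin m) : A k j i = -A k i j := by
  simpa using congrFun (congrFun (hA.1 k) i) j

lemma IsHType.diag (hA : IsHType m n A) (k : Fin n) (i : Fin m) : A k i i = 0 := by
  have := hA.skew k i i
  linarith

lemma IsHType.wv_neg (hA : IsHType m n A) (k : Fin n) (j : Fin m) (p : Pt m n) :
    ∑ i, A k j i * p.1 i = -wv A k j p := by
  rw [wv, ← Finset.sum_neg_distrib]
  exact Finset.sum_congr rfl fun i _ => by rw [hA.skew k i j]; ring

/-- Polarised orthogonality: `A_k A_r + A_r A_k = -2 δ_{kr}`. -/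
lemma IsHType.cliff (hA : IsHType m n A) (k r : Fin n) :
    A k * A r + A r * A k = if k = r then (-2 : ℝ) • (1 : Matrix (Fin m) (Fin m) ℝ) else 0 := by
  split_ifs with h
  · subst h
    have h1 := hA.2.1 k
    rw [hA.1 k, mul_neg, neg_eq_iff_eq_neg] at h1
    rw [h1, neg_smul, two_smul, neg_add]
  · exact hA.2.2 k r h

/-- `∑_l (A_kᵀ x)_l (A_r)_{lj}` is the `j`-th entry of `(A_k A_r)ᵀ x`. -/
lemma sum_w_A (k r : Fin n) (j : Fin m) (p : Pt m n) :
    ∑ l, wv A k l p * A r l j = ∑ i, (A k * A r) i j * p.1 i := by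
  simp only [wv, Matrix.mul_apply, Finset.sum_mul]
  rw [Finset.sum_comm]
  exact Finset.sum_congr rfl fun i _ => Finset.sum_congr rfl fun l _ => by ring

lemma IsHType.sum_w_A_add (hA : IsHType m n A) (k r : Fin n) (j : Fin m) (p : Pt m n) :
    ∑ l, wv A k l p * A r l j + ∑ l, wv A r l p * A k l j
      = if k = r then -2 * p.1 j else 0 := by
  have h : ∀ i, (A k * A r) i j + (A r * A k) i j
      = (if k = r then (-2 : ℝ) • (1 : Matrix (Fin m) (Fin m) ℝ) else 0) i j :=
    fun i => by rw [← hA.cliff k r]; rfl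
  rw [sum_w_A, sum_w_A, ← Finset.sum_add_distrib]
  simp only [← add_mul, h]
  split_ifs <;> simp [Matrix.one_apply]

lemma IsHType.sum_w_A_self (hA : IsHType m n A) (k : Fin n) (j : Fin m) (p : Pt m n) :
    ∑ l, wv A k l p * A k l j = -p.1 j := by
  have := hA.sum_w_A_add k k j p
  rw [if_pos rfl] at this
  linarith

lemma IsHType.sum_ww (hA : IsHType m n A) (k r : Fin n) (p : Pt m n) :
    ∑ l, wv A k l p * wv A r l p = if k = r then xsq p else 0 := by
  have key : ∀ k r, ∑ l, wv A k l p * wv A r l p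
      = -∑ j, (∑ l, wv A k l p * A r l j) * p.1 j := by
    intro k r
    simp only [Finset.sum_mul]
    rw [Finset.sum_comm, ← Finset.sum_neg_distrib]
    refine Finset.sum_congr rfl fun l _ => ?_
    have := hA.wv_neg r l p
    rw [eq_neg_iff_add_eq_zero, add_comm, ← eq_neg_iff_add_eq_zero] at this
    rw [this, mul_neg, Finset.mul_sum]
    simp only [mul_assoc]
  have h2 : ∑ l, wv A k l p * wv A r l p = ∑ l, wv A r l p * wv A k l p :=
    Finset.sum_congr rfl fun l _ => mul_comm _ _
  have h3 : ∑ l, wv A k l p * wv A r l p + ∑ l, wv A r l p * wv A k l p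
      = if k = r then 2 * xsq p else 0 := by
    rw [key k r, key r k, ← neg_add, ← Finset.sum_add_distrib]
    simp only [← add_mul, hA.sum_w_A_add]
    split_ifs
    · rw [xsq, Finset.mul_sum, ← Finset.sum_neg_distrib]
      exact Finset.sum_congr rfl fun l _ => by ring
    · simp
  split_ifs at h3 ⊢ <;> linarith

lemma IsHType.sum_xw (hA : IsHType m n A) (k : Fin n) (p : Pt m n) :
    ∑ l, p.1 l * wv A k l p = 0 := by
  have h1 : ∑ l, p.1 l * wv A k l p = ∑ l, p.1 l * ∑ i, A k l i * p.1 i := by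
    simp only [wv, Finset.mul_sum]
    rw [Finset.sum_comm]
    exact Finset.sum_congr rfl fun i _ => Finset.sum_congr rfl fun l _ => by ring
  simp only [hA.wv_neg, mul_neg, Finset.sum_neg_distrib] at h1
  linarith

/-- `⟨∇D, f⟩` for a horizontal field `f`. -/
lemma sum_G_mul (f : Fin m → ℝ) (p : Pt m n) :
    ∑ l, Gf A l p * f l = sf p * ∑ l, p.1 l * f l + ∑ k, p.2 k * ∑ l, wv A k l p * f l := by
  simp only [Gf, add_mul, Finset.sum_add_distrib, Finset.sum_mul, Finset.mul_sum]
  congr 1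
  · exact Finset.sum_congr rfl fun _ _ => by ring
  · rw [Finset.sum_comm]
    exact Finset.sum_congr rfl fun _ _ => Finset.sum_congr rfl fun _ _ => by ring

lemma IsHType.sum_G_x (hA : IsHType m n A) (p : Pt m n) :
    ∑ l, Gf A l p * p.1 l = sf p * xsq p := by
  rw [sum_G_mul]
  have : ∀ k, ∑ l, wv A k l p * p.1 l = 0 := fun k => by
    rw [← hA.sum_xw k p]; exact Finset.sum_congr rfl fun _ _ => mul_comm _ _
  simp [this, xsq, sq]

lemma IsHType.sum_G_w (hA : IsHType m n A) (k : Fin n) (p : Pt m n) :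
    ∑ l, Gf A l p * wv A k l p = p.2 k * xsq p := by
  rw [sum_G_mul, hA.sum_xw]
  simp [hA.sum_ww]

/-- The eikonal identity `|∇D|² = |x|² D`. -/
lemma IsHType.sum_G_G (hA : IsHType m n A) (p : Pt m n) :
    ∑ l, Gf A l p * Gf A l p = xsq p * Df p := by
  have h1 : ∑ l, p.1 l * Gf A l p = sf p * xsq p := by
    rw [← hA.sum_G_x p]; exact Finset.sum_congr rfl fun _ _ => mul_comm _ _
  have h2 : ∀ k, ∑ l, wv A k l p * Gf A l p = p.2 k * xsq p := fun k => by
    rw [← hA.sum_G_w k p]; exact Finset.sum_congr rfl fun _ _ => mul_comm _ _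
  rw [sum_G_mul, h1]
  simp only [h2, Df, mul_add, Finset.mul_sum]
  congr 1
  · ring
  · exact Finset.sum_congr rfl fun _ _ => by ring

end Algebra

/-! ### The sub-Laplacian of `D^a P` -/

/-- The diagonal second derivative `X_j X_j D`. -/
lemma IsHType.hasX_G (hA : IsHType m n A) (j : Fin m) : HasX A j (Gf A j)
    (fun p => sf p + p.1 j * p.1 j / 2 + ∑ k, (1/2) * (wv A k j p * wv A k j p)) := by
  refine (((hasX_s j).mul (hasX_x j j)).add
    (HasX.sum Finset.univ fun k => (hasX_t j k).mul (hasX_w j j k))).of_eq fun p => ?_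
  simp only [if_true, hA.diag, sf]
  congr 1
  · ring
  · exact Finset.sum_congr rfl fun _ _ => by ring

/-- `Δ_G D = m (1 + |x|²/4) + (n+1)/2 |x|²`. -/
lemma IsHType.sum_hess_D (hA : IsHType m n A) (p : Pt m n) :
    ∑ j, (sf p + p.1 j * p.1 j / 2 + ∑ k, (1/2) * (wv A k j p * wv A k j p))
      = m * sf p + ((n : ℝ) + 1) / 2 * xsq p := by
  rw [Finset.sum_add_distrib, Finset.sum_add_distrib, Finset.sum_comm, ← Finset.sum_div]
  simp only [← Finset.mul_sum, hA.sum_ww, xsq, sq, if_true]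
  simp
  ring

lemma Uf_eq (p : Pt m n) : Uf m n p = Df p ^ (-(Qh m n - 2) / 4) := rfl

lemma Uf_rpow (hQ : Qh m n - 2 ≠ 0) (p : Pt m n) :
    Uf m n p ^ (4 / (Qh m n - 2)) = (Df p)⁻¹ := by
  rw [Uf_eq, ← Real.rpow_mul (Df_pos p).le, ← Real.rpow_neg_one]
  congr 1
  field_simp

lemma Uf_mul (hQ : Qh m n - 2 ≠ 0) (p : Pt m n) :
    Uf m n p * Uf m n p ^ (4 / (Qh m n - 2)) = Df p ^ (-(Qh m n + 2) / 4) := by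
  rw [Uf_rpow hQ, Uf_eq, ← Real.rpow_neg_one, ← Real.rpow_add (Df_pos p)]
  congr 1
  ring

/-- Reduction of the linearized equation for `V = D^a P`, `a = -(Q+2)/4`, to the equation
`D Δ_G P + 2a ⟨∇D, ∇P⟩ = a |x|² P` for the polynomial factor `P`. -/
lemma IsHType.reduction (hA : IsHType m n A) (hQ : Qh m n - 2 ≠ 0) (V P : Pt m n → ℝ)
    (P' P'' : Fin m → Pt m n → ℝ)
    (hV : ∀ p, V p = Df p ^ (-(Qh m n + 2) / 4) * P p)
    (hP : ∀ j, HasX A j P (P' j)) (hP' : ∀ j, HasX A j (P' j) (P'' j)) (p : Pt m n)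
    (key : Df p * ∑ j, P'' j p + 2 * (-(Qh m n + 2) / 4) * ∑ j, Gf A j p * P' j p
      = (-(Qh m n + 2) / 4) * xsq p * P p) :
    subLap m n A V p
      + ((m : ℝ) * (Qh m n + 2) / 4) * Uf m n p ^ (4 / (Qh m n - 2)) * V p = 0 := by
  obtain rfl : V = fun p => Df p ^ (-(Qh m n + 2) / 4) * P p := funext hV
  set a : ℝ := -(Qh m n + 2) / 4 with ha
  have h1 : ∀ j, Xvf m n A j (fun p => Df p ^ a * P p)
      = fun p => Df p ^ a * P' j p + P p * (a * Df p ^ (a - 1) * Gf A j p) := fun j =>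
    funext (((hasX_D j).rpow Df_pos a).mul (hP j)).2
  have h2 := fun j => ((((hasX_D (A := A) j).rpow Df_pos a).mul (hP' j)).add ((hP j).mul
    ((((hasX_D (A := A) j).rpow Df_pos (a - 1)).const_mul a).mul (hA.hasX_G j)))).2 p
  have hD := Df_pos p
  have e1 : Df p ^ (a - 1) = Df p ^ a * (Df p)⁻¹ := by
    rw [Real.rpow_sub_one hD.ne', div_eq_mul_inv]
  have e2 : Df p ^ (a - 1 - 1) = Df p ^ a * (Df p)⁻¹ * (Df p)⁻¹ := by
    rw [Real.rpow_sub_one hD.ne', e1, div_eq_mul_inv]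
  have hs : subLap m n A (fun p => Df p ^ a * P p) p
      = Df p ^ a * ((∑ j, P'' j p) + 2 * a * (Df p)⁻¹ * (∑ j, Gf A j p * P' j p)
        + a * (Df p)⁻¹ * P p *
          (∑ j, (sf p + p.1 j * p.1 j / 2 + ∑ k, (1/2) * (wv A k j p * wv A k j p)))
        + a * (a - 1) * (Df p)⁻¹ * (Df p)⁻¹ * P p * ∑ j, Gf A j p * Gf A j p) := by
    unfold subLap
    simp only [h1]
    rw [Finset.sum_congr rfl fun j _ => h2 j]
    simp only [e1, e2]
    simp only [Finset.mul_sum _ _ (2 * a * (Df p)⁻¹),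
      Finset.mul_sum _ _ (a * (Df p)⁻¹ * P p),
      Finset.mul_sum _ _ (a * (a - 1) * (Df p)⁻¹ * (Df p)⁻¹ * P p),
      Finset.mul_sum _ _ (Df p ^ a), ← Finset.sum_add_distrib]
    exact Finset.sum_congr rfl fun j _ => by ring
  rw [hs, hA.sum_hess_D, hA.sum_G_G, Uf_rpow hQ]
  have hm : (m : ℝ) = -4 * a - 2 - 2 * n := by rw [ha, Qh]; ring
  have hq : (m : ℝ) * (Qh m n + 2) / 4 = -a * m := by rw [ha]; ring
  rw [hq]
  have key' : ∑ j, P'' j p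
      = (Df p)⁻¹ * (a * xsq p * P p - 2 * a * ∑ j, Gf A j p * P' j p) := by
    rw [← key]; field_simp; ring
  rw [key', hm, sf]
  field_simp
  ring

/-! ### The polynomial factor of `V_j`, `1 ≤ j ≤ m` -/

/-- The factor `P = (1 + |x|²/4) x_j + ∑_r t_r (A_r x)_j` of `V_j`, where `A_r x = -A_rᵀ x`. -/
def P1 (A : Fin n → Matrix (Fin m) (Fin m) ℝ) (j : Fin m) (p : Pt m n) : ℝ :=
  sf p * p.1 j - ∑ r, p.2 r * wv A r j p

lemma hasX_P1 (j l : Fin m) : HasX A l (P1 A j) (fun p =>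
    (sf p * (if j = l then 1 else 0) + p.1 j * (p.1 l / 2))
      - ∑ r, (p.2 r * A r l j + wv A r j p * (1/2 * wv A r l p))) :=
  ((hasX_s l).mul (hasX_x l j)).sub
    (HasX.sum Finset.univ fun r => (hasX_t l r).mul (hasX_w l j r))

lemma IsHType.hasX_P1' (hA : IsHType m n A) (j l : Fin m) : HasX A l (fun p : Pt m n =>
    (sf p * (if j = l then 1 else 0) + p.1 j * (p.1 l / 2))
      - ∑ r, (p.2 r * A r l j + wv A r j p * (1/2 * wv A r l p)))
    (fun p => p.1 l * (if j = l then 1 else 0) + p.1 j / 2 - ∑ r, wv A r l p * A r l j) := by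
  have hx : HasX A l (fun p : Pt m n => p.1 l / 2) (fun _ => 1 / 2) := by
    simpa [div_eq_inv_mul] using (hasX_x (A := A) l l).const_mul (1/2)
  have hd : HasX A l (fun p : Pt m n => sf p * (if j = l then 1 else 0))
      (fun p => p.1 l / 2 * (if j = l then 1 else 0)) :=
    ((hasX_s l).mul (HasX.const _)).of_eq fun p => by ring
  refine ((hd.add ((hasX_x l j).mul hx)).sub (HasX.sum Finset.univ fun r =>
    ((hasX_t l r).mul (HasX.const (A r l j))).add
      ((hasX_w l j r).mul ((hasX_w l l r).const_mul (1/2))))).of_eq fun p => ?_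
  congr 1
  · ring
  · exact Finset.sum_congr rfl fun r _ => by rw [hA.diag]; ring

lemma IsHType.lap_P1 (hA : IsHType m n A) (j : Fin m) (p : Pt m n) :
    ∑ l, (p.1 l * (if j = l then 1 else 0) + p.1 j / 2 - ∑ r, wv A r l p * A r l j)
      = (Qh m n + 2) / 2 * p.1 j := by
  rw [Finset.sum_sub_distrib, Finset.sum_add_distrib, Finset.sum_comm]
  simp [hA.sum_w_A_self, Qh]
  ring

/-- Only the symmetric part of `A_k A_r` survives against `t_k t_r`. -/
lemma IsHType.sum_tt (hA : IsHType m n A) (j : Fin m) (p : Pt m n) :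
    ∑ k, p.2 k * ∑ l, wv A k l p * ∑ r, p.2 r * A r l j = -(∑ r, p.2 r ^ 2) * p.1 j := by
  have e : ∑ k, p.2 k * ∑ l, wv A k l p * ∑ r, p.2 r * A r l j
      = ∑ k, ∑ r, p.2 k * p.2 r * ∑ l, wv A k l p * A r l j := by
    refine Finset.sum_congr rfl fun k _ => ?_
    simp only [Finset.mul_sum]
    rw [Finset.sum_comm]
    exact Finset.sum_congr rfl fun _ _ => Finset.sum_congr rfl fun _ _ => by ring
  have e' : ∑ k, ∑ r, p.2 k * p.2 r * ∑ l, wv A k l p * A r l j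
      = ∑ k, ∑ r, p.2 k * p.2 r * ∑ l, wv A r l p * A k l j := by
    rw [Finset.sum_comm]
    exact Finset.sum_congr rfl fun _ _ => Finset.sum_congr rfl fun _ _ => by ring
  have h : ∑ k, ∑ r, p.2 k * p.2 r * ∑ l, wv A k l p * A r l j
      + ∑ k, ∑ r, p.2 k * p.2 r * ∑ l, wv A r l p * A k l j
      = 2 * (-(∑ r, p.2 r ^ 2) * p.1 j) := by
    simp only [← Finset.sum_add_distrib, ← mul_add, hA.sum_w_A_add]
    simp only [mul_ite, mul_zero, Finset.sum_ite_eq, Finset.mem_univ, if_true, neg_mul,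
      Finset.sum_mul, Finset.mul_sum, mul_neg, Finset.sum_neg_distrib]
    congr 1
    exact Finset.sum_congr rfl fun _ _ => by ring
  rw [e]
  linarith

/-- `⟨∇D, ∇P⟩ = |x|²/2 P + D x_j` for `P = P1 A j`. -/
lemma IsHType.grad_P1 (hA : IsHType m n A) (j : Fin m) (p : Pt m n) :
    ∑ l, Gf A l p * ((sf p * (if j = l then 1 else 0) + p.1 j * (p.1 l / 2))
      - ∑ r, (p.2 r * A r l j + wv A r j p * (1/2 * wv A r l p)))
      = xsq p / 2 * P1 A j p + Df p * p.1 j := by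
  have e : ∀ l, Gf A l p * ((sf p * (if j = l then 1 else 0) + p.1 j * (p.1 l / 2))
      - ∑ r, (p.2 r * A r l j + wv A r j p * (1/2 * wv A r l p)))
      = sf p * (if j = l then Gf A l p else 0) + p.1 j / 2 * (Gf A l p * p.1 l)
        - Gf A l p * (∑ r, p.2 r * A r l j)
        - ∑ r, (1/2 * wv A r j p) * (Gf A l p * wv A r l p) := by
    intro l
    have : ∑ r, (1/2 * wv A r j p) * (Gf A l p * wv A r l p)
        = Gf A l p * ∑ r, wv A r j p * (1/2 * wv A r l p) := by
      rw [Finset.mul_sum]; exact Finset.sum_congr rfl fun _ _ => by ring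
    rw [this, Finset.sum_add_distrib]
    split_ifs <;> ring
  have hB : ∑ l, p.1 l * ∑ r, p.2 r * A r l j = ∑ r, p.2 r * wv A r j p := by
    simp only [wv, Finset.mul_sum]
    rw [Finset.sum_comm]
    exact Finset.sum_congr rfl fun _ _ => Finset.sum_congr rfl fun _ _ => by ring
  have hC : ∑ r, (1/2 * wv A r j p) * (p.2 r * xsq p)
      = xsq p / 2 * ∑ r, p.2 r * wv A r j p := by
    rw [Finset.mul_sum]; exact Finset.sum_congr rfl fun _ _ => by ring
  simp only [e]
  rw [Finset.sum_sub_distrib, Finset.sum_sub_distrib, Finset.sum_add_distrib, ← Finset.mul_sum,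
    ← Finset.mul_sum, hA.sum_G_x, sum_G_mul, hB, hA.sum_tt, Finset.sum_comm]
  simp only [← Finset.mul_sum, hA.sum_G_w, Finset.sum_ite_eq, Finset.mem_univ, if_true]
  rw [hC, P1, Df, Gf]
  ring

lemma Qh_sub_ne (hm : 1 ≤ m) (hn : 1 ≤ n) : Qh m n - 2 ≠ 0 := by
  have h1 : (1 : ℝ) ≤ m := by exact_mod_cast hm
  have h2 : (1 : ℝ) ≤ n := by exact_mod_cast hn
  have : 0 < Qh m n - 2 := by unfold Qh; linarith
  exact this.ne'

end Helpers

/-! ### The linearized equations -/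

/-- **Linearized equations (2.5)/(2.8)**: each `V_i = U·ω_i` satisfies
`Δ_G V_i + (m(Q+2)/4) U^{4/(Q-2)} V_i = 0` everywhere. -/
theorem linearized_equations (m n : ℕ) (hm : 1 ≤ m) (hn : 1 ≤ n)
    (A : Fin n → Matrix (Fin m) (Fin m) ℝ) (hA : IsHType m n A) :
    (∀ j : Fin m, ∀ p : Pt m n,
      subLap m n A (fun q => Uf m n q * om1 m n A j q) p
        + ((m : ℝ) * (Qh m n + 2) / 4) * Uf m n p ^ (4 / (Qh m n - 2))
            * (Uf m n p * om1 m n A j p) = 0) ∧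
    (∀ r : Fin n, ∀ p : Pt m n,
      subLap m n A (fun q => Uf m n q * om2 m n r q) p
        + ((m : ℝ) * (Qh m n + 2) / 4) * Uf m n p ^ (4 / (Qh m n - 2))
            * (Uf m n p * om2 m n r p) = 0) ∧
    (∀ p : Pt m n,
      subLap m n A (fun q => Uf m n q * om3 m n q) p
        + ((m : ℝ) * (Qh m n + 2) / 4) * Uf m n p ^ (4 / (Qh m n - 2))
            * (Uf m n p * om3 m n p) = 0) := by
  have hQ := Qh_sub_ne hm hn
  refine ⟨fun j p => ?_, fun r p => ?_, fun p => ?_⟩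
  · refine hA.reduction hQ _ (P1 A j) _ _ (fun q => ?_) (hasX_P1 j) (hA.hasX_P1' j) p ?_
    · have e : ∑ r, ∑ i, q.2 r * q.1 i * A r j i = -∑ r, q.2 r * wv A r j q := by
        rw [← Finset.sum_neg_distrib]
        refine Finset.sum_congr rfl fun r _ => ?_
        rw [← mul_neg, ← hA.wv_neg, Finset.mul_sum]
        exact Finset.sum_congr rfl fun i _ => by ring
      rw [om1, e, ← mul_assoc, Uf_mul hQ, P1, sf, xsq, sub_eq_add_neg]
    · rw [hA.lap_P1, hA.grad_P1]
      ring
  · refine hA.reduction hQ _ (fun q => 2 * q.2 r) _ _ (fun q => ?_)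
      (fun l => (hasX_t l r).const_mul 2)
      (fun l => (((hasX_w l l r).const_mul (1/2)).const_mul 2)) p ?_
    · rw [← Uf_mul hQ, om2]; ring
    · have e : ∑ l, Gf A l p * (2 * (1/2 * wv A r l p)) = p.2 r * xsq p := by
        rw [← hA.sum_G_w]; exact Finset.sum_congr rfl fun _ _ => by ring
      rw [e]
      simp only [hA.diag]
      simp
      ring
  -- The last polynomial factor equals `2 (1 + |x|²/4) - D`.
  · have hx : ∀ l, HasX A l (fun p : Pt m n => 2 * (p.1 l / 2)) (fun _ => 1) := fun l => by
      simpa [mul_div_cancel₀] using hasX_x (A := A) l l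
    refine hA.reduction hQ _ (fun q => 2 * sf q - Df q) _ _ (fun q => ?_)
      (fun l => ((hasX_s l).const_mul 2).sub (hasX_D l))
      (fun l => (hx l).sub (hA.hasX_G l)) p ?_
    · rw [om3, ← mul_assoc, Uf_mul hQ, Df, sf, xsq]; ring
    · have e : ∑ l, Gf A l p * (2 * (p.1 l / 2) - Gf A l p)
          = sf p * xsq p - xsq p * Df p := by
        rw [← hA.sum_G_x, ← hA.sum_G_G, ← Finset.sum_sub_distrib]
        exact Finset.sum_congr rfl fun _ _ => by ring
      rw [e, Finset.sum_sub_distrib, hA.sum_hess_D]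
      simp only [Finset.sum_const, Finset.card_univ, Fintype.card_fin, nsmul_eq_mul, mul_one, Qh, sf]
      ring
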